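/- For every finite vertex set V, every digraph G=(V,A), every sign vector σ ∈ {−1,1}^A, and every a ∈ [0,1), the set of pairs (T,x) ∈ [0,1]^A × [0,1]^V for which the asymptotic period P(F_{G,σ,T,a}, x) is finite has full Lebesgue measure in [0,1]^A × [0,1]^V. -/

import Mathlib

open MeasureTheory Filter Topology
open scoped ENNReal

/-- The Heaviside function: `H(s) = 1` if `s ≥ 0`, and `0` otherwise. -/
noncomputable def heaviside (s : ℝ) : ℝ := if 0 ≤ s then 1 else 0

/-- Signs `{-1,1}` encoded by booleans: `true ↦ +1`, `false ↦ -1`. -/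
def signVal (b : Bool) : ℝ := if b then 1 else -1

variable {V : Type*} [Fintype V] [DecidableEq V]

/-- In-degree of a vertex `v` in the arrow set `A`: `Id(v) = #{u : (u,v) ∈ A}`. -/
def inDeg {V : Type*} [DecidableEq V] (A : Finset (V × V)) (v : V) : ℕ :=
  (A.filter fun e => e.2 = v).card

/-- The regulatory map `F_{G,σ,T,a}(x)_v = a x_v + (1-a) (1/Id(v)) Σ_{(u,v)∈A} H(σ_{(u,v)}(x_u - T_{(u,v)}))`
(the interaction term being `0` when `Id(v) = 0`, by the convention `(0 : ℝ)⁻¹ = 0`). -/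
noncomputable def regMap {V : Type*} [Fintype V] [DecidableEq V] (A : Finset (V × V))
    (σ : {e // e ∈ A} → Bool) (T : {e // e ∈ A} → ℝ) (a : ℝ) (x : V → ℝ) : V → ℝ := fun v =>
  a * x v + (1 - a) * ((inDeg A v : ℝ)⁻¹ *
    ∑ e ∈ A.attach.filter (fun e => e.val.2 = v),
      heaviside (signVal (σ e) * (x e.val.1 - T e)))

/-- The cube `[0,1]^V`. -/
def cubeV (V : Type*) [Fintype V] : Set (V → ℝ) := Set.pi Set.univ fun _ => Set.Icc (0:ℝ) 1

/-- The cube `[0,1]^A`. -/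
def cubeA {V : Type*} [Fintype V] [DecidableEq V] (A : Finset (V × V)) :
    Set ({e // e ∈ A} → ℝ) := Set.pi Set.univ fun _ => Set.Icc (0:ℝ) 1

/-- The discontinuity set `Δ_T = {x ∈ [0,1]^V : x_u = T_{(u,v)} for some (u,v) ∈ A}`. -/
def discSet {V : Type*} [Fintype V] [DecidableEq V] (A : Finset (V × V))
    (T : {e // e ∈ A} → ℝ) : Set (V → ℝ) :=
  {x | x ∈ cubeV V ∧ ∃ e : {e // e ∈ A}, x e.val.1 = T e}

/-- `inf_{t ≥ 0} d_max(F^t(x), Δ_T)` as an extended nonnegative real (the metric on `V → ℝ`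
is the sup metric `d_max`, and the distance to the empty set is `∞`). -/
noncomputable def orbitGap {V : Type*} [Fintype V] [DecidableEq V] (A : Finset (V × V))
    (σ : {e // e ∈ A} → Bool) (T : {e // e ∈ A} → ℝ) (a : ℝ) (x : V → ℝ) : ℝ≥0∞ :=
  ⨅ t : ℕ, EMetric.infEdist ((regMap A σ T a)^[t] x) (discSet A T)

/-- `asympPeriod A σ T a x τ` says that the asymptotic period `P(F_{G,σ,T,a}, x)` equals `τ`:
there is a periodic point `y ∈ [0,1]^V` of minimal period `τ ≥ 1` whose orbit attracts that
of `x` (distances are the sup metric `d_max`). -/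
def asympPeriod {V : Type*} [Fintype V] [DecidableEq V] (A : Finset (V × V))
    (σ : {e // e ∈ A} → Bool) (T : {e // e ∈ A} → ℝ) (a : ℝ) (x : V → ℝ) (τ : ℕ) : Prop :=
  1 ≤ τ ∧ ∃ y ∈ cubeV V, (regMap A σ T a)^[τ] y = y ∧
    (∀ t, 0 < t → t < τ → (regMap A σ T a)^[t] y ≠ y) ∧
    Filter.Tendsto (fun t => dist ((regMap A σ T a)^[t] x) ((regMap A σ T a)^[t] y))
      Filter.atTop (nhds 0)

/-!
Under `(T, x) ↦ (T, F x)` the states of two points with the same itinerary approach each other like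
`a ^ n`, so after `n` steps the states are confined to boxes of size `a ^ n`, one for each
itinerary. Near a given point, each of the first `n` symbols is decided by a constant or by the
sign of `a ^ k * α - β`, which changes at most once in `k`; hence a small ball realises only
polynomially many itineraries of length `n`. By compactness and submultiplicativity the number of
all itineraries grows slower than `b ^ (-n)` for any `b < 1`. With `a < b < 1`, the thresholds that
stay close to one of the boxes for all `n` form a null set. For every other `T`, after some time
all orbits keep a uniform distance from the thresholds, so the map contracts near every orbit, and
a close return produces an attracting periodic orbit.
-/

section AsymptoticPeriodicity

variable {α : Type*}

/-- `x` is asymptotically periodic for `f` if some periodic orbit attracts the orbit of `x` in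
phase. -/
def IsAsympPeriodic [PseudoMetricSpace α] (f : α → α) (x : α) : Prop :=
  ∃ y ∈ Function.periodicPts f, Tendsto (fun t => dist (f^[t] x) (f^[t] y)) atTop (𝓝 0)

/-- `f` contracts distances to the orbit of `x` by the factor `a`, as long as they are less
than `δ`. The other point is arbitrary, so `f` may be discontinuous away from the orbit. -/
def ContractsAlongOrbit [PseudoMetricSpace α] (f : α → α) (a δ : ℝ) (x : α) : Prop :=
  ∀ k w, dist (f^[k] x) w < δ → dist (f (f^[k] x)) (f w) ≤ a * dist (f^[k] x) w

lemma IsAsympPeriodic.of_iterate [PseudoMetricSpace α] {f : α → α} {x : α} {N : ℕ}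
    (h : IsAsympPeriodic f (f^[N] x)) : IsAsympPeriodic f x := by
  obtain ⟨y, ⟨p, hp, hy⟩, hlim⟩ := h
  have hN : f^[N] (f^[N * (p - 1)] y) = y := by
    rw [← Function.iterate_add_apply, add_comm, ← mul_add_one, Nat.sub_one_add_one hp.ne']
    exact hy.const_mul N
  refine ⟨f^[N * (p - 1)] y, Function.mk_mem_periodicPts hp (hy.apply_iterate _), ?_⟩
  rw [← tendsto_add_atTop_iff_nat N]
  simpa only [Function.iterate_add_apply, hN] using hlim

namespace ContractsAlongOrbit

lemma iterate [PseudoMetricSpace α] {f : α → α} {a δ : ℝ} {x : α}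
    (h : ContractsAlongOrbit f a δ x) (N : ℕ) : ContractsAlongOrbit f a δ (f^[N] x) := by
  intro k w hw
  rw [← Function.iterate_add_apply] at hw ⊢
  exact h _ w hw

lemma dist_iterate_le [PseudoMetricSpace α] {f : α → α} {a δ : ℝ} {x w : α}
    (h : ContractsAlongOrbit f a δ x) (ha0 : 0 ≤ a) (ha1 : a ≤ 1) (hw : dist x w < δ) (t : ℕ) :
    dist (f^[t] x) (f^[t] w) ≤ a ^ t * dist x w := by
  induction t with
  | zero => simp
  | succ t ih =>
    have hδ : dist (f^[t] x) (f^[t] w) < δ :=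
      (ih.trans (mul_le_of_le_one_left dist_nonneg (pow_le_one₀ ha0 ha1))).trans_lt hw
    simp only [Function.iterate_succ_apply']
    calc dist (f (f^[t] x)) (f (f^[t] w)) ≤ a * dist (f^[t] x) (f^[t] w) := h t _ hδ
      _ ≤ a * (a ^ t * dist x w) := mul_le_mul_of_nonneg_left ih ha0
      _ = a ^ (t + 1) * dist x w := by ring

lemma tendsto_dist_iterate [PseudoMetricSpace α] {f : α → α} {a δ : ℝ} {x w : α}
    (h : ContractsAlongOrbit f a δ x) (ha0 : 0 ≤ a) (ha1 : a < 1) (hw : dist x w < δ) :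
    Tendsto (fun t => dist (f^[t] x) (f^[t] w)) atTop (𝓝 0) := by
  refine squeeze_zero (fun _ => dist_nonneg) (h.dist_iterate_le ha0 ha1.le hw) ?_
  simpa using (tendsto_pow_atTop_nhds_zero_of_lt_one ha0 ha1).mul_const (dist x w)

variable [MetricSpace α] {f : α → α} {a δ : ℝ} {x : α}

lemma isPeriodicPt_of_tendsto (h : ContractsAlongOrbit f a δ x) (ha0 : 0 ≤ a) (ha1 : a ≤ 1)
    (hδ : 0 < δ) {p : ℕ} {y : α} (hy : Tendsto (fun m => f^[m * p] x) atTop (𝓝 y)) :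
    Function.IsPeriodicPt f p y := by
  have hdist := tendsto_iff_dist_tendsto_zero.1 hy
  refine tendsto_nhds_unique (f := fun m => f^[(m + 1) * p] x) ?_
    ((tendsto_add_atTop_iff_nat 1).2 hy)
  refine tendsto_iff_dist_tendsto_zero.2 (squeeze_zero' (.of_forall fun _ => dist_nonneg) ?_ hdist)
  filter_upwards [hdist.eventually_lt_const hδ] with m hm
  rw [add_one_mul, add_comm, Function.iterate_add_apply]
  exact ((h.iterate (m * p)).dist_iterate_le ha0 ha1 hm p).trans
    (mul_le_of_le_one_left dist_nonneg (pow_le_one₀ ha0 ha1))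

lemma isAsympPeriodic_of_dist_lt [CompleteSpace α] (h : ContractsAlongOrbit f a δ x)
    (ha0 : 0 ≤ a) (ha1 : a < 1) {p : ℕ} (hp : 0 < p) (hx : dist x (f^[p] x) < δ) :
    IsAsympPeriodic f x := by
  have hcauchy : CauchySeq fun m => f^[m * p] x := by
    refine cauchySeq_of_le_geometric (a ^ p) (dist x (f^[p] x)) (pow_lt_one₀ ha0 ha1 hp.ne')
      fun m => ?_
    rw [add_one_mul, Function.iterate_add_apply, ← pow_mul', mul_comm (dist _ _)]
    exact h.dist_iterate_le ha0 ha1.le hx (m * p)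
  obtain ⟨y, hy⟩ := cauchySeq_tendsto_of_complete hcauchy
  have hδ : 0 < δ := dist_nonneg.trans_lt hx
  have hper : Function.IsPeriodicPt f p y := h.isPeriodicPt_of_tendsto ha0 ha1.le hδ hy
  obtain ⟨m, hm⟩ := ((tendsto_iff_dist_tendsto_zero.1 hy).eventually_lt_const hδ).exists
  exact IsAsympPeriodic.of_iterate ⟨y, Function.mk_mem_periodicPts hp hper,
    (h.iterate (m * p)).tendsto_dist_iterate ha0 ha1 hm⟩

theorem isAsympPeriodic [ProperSpace α] (h : ContractsAlongOrbit f a δ x) (ha0 : 0 ≤ a)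
    (ha1 : a < 1) (hδ : 0 < δ) (hb : Bornology.IsBounded (Set.range fun k => f^[k] x)) :
    IsAsympPeriodic f x := by
  obtain ⟨_, -, φ, hφ, hlim⟩ := tendsto_subseq_of_bounded hb fun k => Set.mem_range_self k
  obtain ⟨N, hN⟩ := Metric.cauchySeq_iff'.1 hlim.cauchySeq δ hδ
  have hlt : φ N < φ (N + 1) := hφ N.lt_succ_self
  refine IsAsympPeriodic.of_iterate ((h.iterate (φ N)).isAsympPeriodic_of_dist_lt ha0 ha1
    (Nat.sub_pos_of_lt hlt) ?_)
  rw [← Function.iterate_add_apply, Nat.sub_add_cancel hlt.le, dist_comm]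
  exact hN (N + 1) N.le_succ

end ContractsAlongOrbit

end AsymptoticPeriodicity

section ItineraryComplexity

lemma ncard_image_le_ncard_image_of_factors {α β γ : Type*} {f : α → β} {g : α → γ} {U : Set α}
    (hfin : (f '' U).Finite) (h : ∀ x ∈ U, ∀ y ∈ U, f x = f y → g x = g y) :
    (g '' U).ncard ≤ (f '' U).ncard := by
  obtain ⟨R, hRU, hR⟩ := Set.exists_subset_bijOn U f
  have hsub : g '' U ⊆ g '' R := by
    rintro _ ⟨x, hx, rfl⟩
    obtain ⟨r, hr, hrx⟩ := hR.surjOn (Set.mem_image_of_mem f hx)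
    exact ⟨r, hr, h r (hRU hr) x hx hrx⟩
  have hRfin : R.Finite := hR.finite_iff_finite.2 hfin
  calc (g '' U).ncard ≤ (g '' R).ncard := Set.ncard_le_ncard hsub (hRfin.image g)
    _ ≤ R.ncard := Set.ncard_image_le hRfin
    _ = (f '' U).ncard := hR.ncard_eq

variable {α ι : Type*}

/-- The length-`n` itinerary of `x` under `Φ`: the symbols that the coding `s` assigns to
`x, Φ x, …, Φ^[n - 1] x`. -/
def itinerary (Φ : α → α) (s : α → ι) (n : ℕ) (x : α) : Fin n → ι := fun k => s (Φ^[k] x)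

/-- The number of length-`n` itineraries realised by points of `U`; it counts what it should only
when there are finitely many of them, e.g. over a finite alphabet `ι`. -/
noncomputable def itineraryComplexity (Φ : α → α) (s : α → ι) (n : ℕ) (U : Set α) : ℕ :=
  (itinerary Φ s n '' U).ncard

variable {Φ : α → α} {s : α → ι} {n m : ℕ} {U : Set α}

lemma itinerary_eq_iff {x y : α} :
    itinerary Φ s n x = itinerary Φ s n y ↔ ∀ k < n, s (Φ^[k] x) = s (Φ^[k] y) :=
  funext_iff.trans Fin.forall_iff

lemma itinerary_succ_eq_iff {x y : α} :
    itinerary Φ s (n + 1) x = itinerary Φ s (n + 1) y ↔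
      itinerary Φ s n x = itinerary Φ s n y ∧ s (Φ^[n] x) = s (Φ^[n] y) := by
  simp only [itinerary_eq_iff, Nat.forall_lt_succ_right]

lemma itinerary_add_eq_iff {x y : α} :
    itinerary Φ s (n + m) x = itinerary Φ s (n + m) y ↔ itinerary Φ s n x = itinerary Φ s n y ∧
      itinerary Φ s m (Φ^[n] x) = itinerary Φ s m (Φ^[n] y) := by
  induction m with
  | zero => simp [itinerary_eq_iff]
  | succ m ih =>
    rw [← add_assoc, itinerary_succ_eq_iff, ih, itinerary_succ_eq_iff, and_assoc, add_comm n m]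
    simp only [Function.iterate_add_apply]

lemma dist_iterate_le_of_itinerary_eq [PseudoMetricSpace α]
    (hΦ : ∀ x y, s x = s y → dist (Φ x) (Φ y) ≤ dist x y) {x y : α}
    (h : itinerary Φ s n x = itinerary Φ s n y) : dist (Φ^[n] x) (Φ^[n] y) ≤ dist x y := by
  induction n with
  | zero => rfl
  | succ n ih =>
    obtain ⟨hn, hs⟩ := itinerary_succ_eq_iff.1 h
    simpa only [Function.iterate_succ_apply'] using (hΦ _ _ hs).trans (ih hn)

lemma itineraryComplexity_le_card {C : Type*} [Finite C] (code : α → C)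
    (h : ∀ x ∈ U, ∀ y ∈ U, code x = code y → itinerary Φ s n x = itinerary Φ s n y) :
    itineraryComplexity Φ s n U ≤ Nat.card C :=
  (ncard_image_le_ncard_image_of_factors (Set.toFinite (code '' U)) h).trans
    (Set.ncard_le_card _)

variable [Finite ι]

lemma itineraryComplexity_mono {U' : Set α} (h : U ⊆ U') :
    itineraryComplexity Φ s n U ≤ itineraryComplexity Φ s n U' :=
  Set.ncard_le_ncard (Set.image_mono h) (Set.toFinite _)

lemma itineraryComplexity_le_card_mul {κ : Type*} {t : Finset κ} {c : κ → Set α} {K : ℕ}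
    (hU : U ⊆ ⋃ i ∈ t, c i) (hc : ∀ i ∈ t, itineraryComplexity Φ s n (c i ∩ U) ≤ K) :
    itineraryComplexity Φ s n U ≤ t.card * K := by
  have hU' : itinerary Φ s n '' U ⊆ ⋃ i ∈ t, itinerary Φ s n '' (c i ∩ U) := by
    rw [← Set.image_iUnion₂, ← Set.iUnion₂_inter]
    exact Set.image_mono (Set.subset_inter hU subset_rfl)
  calc itineraryComplexity Φ s n U
      ≤ (⋃ i ∈ t, itinerary Φ s n '' (c i ∩ U)).ncard := Set.ncard_le_ncard hU' (Set.toFinite _)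
    _ ≤ ∑ i ∈ t, itineraryComplexity Φ s n (c i ∩ U) := t.set_ncard_biUnion_le _
    _ ≤ t.card * K := by simpa only [smul_eq_mul] using Finset.sum_le_card_nsmul t _ K hc

lemma itineraryComplexity_add_le {L : ℕ}
    (h : ∀ w, itineraryComplexity Φ s m (Φ^[n] '' (itinerary Φ s n ⁻¹' {w} ∩ U)) ≤ L) :
    itineraryComplexity Φ s (n + m) U ≤ itineraryComplexity Φ s n U * L := by
  have hfin : (itinerary Φ s n '' U).Finite := Set.toFinite _
  rw [itineraryComplexity.eq_def Φ s n, Set.ncard_eq_toFinset_card _ hfin]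
  refine itineraryComplexity_le_card_mul (c := fun w => itinerary Φ s n ⁻¹' {w}) ?_ fun w _ => ?_
  · intro x hx
    simpa only [Set.Finite.mem_toFinset, Set.mem_iUnion₂] using
      ⟨_, Set.mem_image_of_mem _ hx, rfl⟩
  · refine le_trans ?_ (h w)
    rw [itineraryComplexity, itineraryComplexity, ← Set.image_comp]
    refine ncard_image_le_ncard_image_of_factors (Set.toFinite _) ?_
    rintro x ⟨hx, -⟩ y ⟨hy, -⟩ hxy
    exact itinerary_add_eq_iff.2 ⟨hx.trans hy.symm, hxy⟩

variable [PseudoMetricSpace α] {K : Set α} {M : ℕ}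

lemma itineraryComplexity_mul_le_pow (hΦ : ∀ x y, s x = s y → dist (Φ x) (Φ y) ≤ dist x y)
    (hK : Set.MapsTo Φ K K) {δ : ℝ}
    (hM : ∀ U ⊆ K, (∀ x ∈ U, ∀ y ∈ U, dist x y < δ) → itineraryComplexity Φ s n U ≤ M) (m : ℕ) :
    ∀ U ⊆ K, (∀ x ∈ U, ∀ y ∈ U, dist x y < δ) → itineraryComplexity Φ s (m * n) U ≤ M ^ m := by
  induction m with
  | zero =>
    intro U _ _
    rw [zero_mul, pow_zero]
    exact Set.ncard_le_one_of_subsingleton _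
  | succ m ih =>
    intro U hU hδ
    rw [add_one_mul, add_comm, pow_succ']
    refine (itineraryComplexity_add_le fun w => ih _ ?_ ?_).trans
      (Nat.mul_le_mul_right _ (hM U hU hδ))
    · rintro _ ⟨x, ⟨-, hx⟩, rfl⟩
      exact hK.iterate n (hU hx)
    · rintro _ ⟨x, ⟨hxw, hx⟩, rfl⟩ _ ⟨y, ⟨hyw, hy⟩, rfl⟩
      exact (dist_iterate_le_of_itinerary_eq hΦ (hxw.trans hyw.symm)).trans_lt (hδ x hx y hy)

lemma exists_itineraryComplexity_mul_le (hΦ : ∀ x y, s x = s y → dist (Φ x) (Φ y) ≤ dist x y)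
    (hKc : IsCompact K) (hK : Set.MapsTo Φ K K)
    (hM : ∀ p ∈ K, ∃ r > 0, itineraryComplexity Φ s n (Metric.ball p r) ≤ M) :
    ∃ N, ∀ m, itineraryComplexity Φ s (m * n) K ≤ N * M ^ m := by
  choose! r hr hrM using hM
  obtain ⟨δ, hδ, hleb⟩ := lebesgue_number_lemma_of_metric
    (c := fun p : K => Metric.ball (p : α) (r p)) hKc (fun _ => Metric.isOpen_ball)
    fun p hp => Set.mem_iUnion.2 ⟨⟨p, hp⟩, Metric.mem_ball_self (hr p hp)⟩
  have hsmall : ∀ U ⊆ K, (∀ x ∈ U, ∀ y ∈ U, dist x y < δ) → itineraryComplexity Φ s n U ≤ M := by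
    intro U hU hdist
    obtain rfl | ⟨x, hx⟩ := U.eq_empty_or_nonempty
    · simp [itineraryComplexity]
    · obtain ⟨p, hp⟩ := hleb x (hU hx)
      exact (itineraryComplexity_mono fun y hy => hp (hdist y hy x hx)).trans (hrM p p.2)
  obtain ⟨t, -, ht, hcov⟩ := hKc.finite_cover_balls (half_pos hδ)
  refine ⟨ht.toFinset.card, fun m => itineraryComplexity_le_card_mul
    (c := fun p => Metric.ball p (δ / 2)) (by simpa using hcov) fun p _ => ?_⟩
  refine itineraryComplexity_mul_le_pow hΦ hK hsmall m _ Set.inter_subset_right ?_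
  rintro x ⟨hx, -⟩ y ⟨hy, -⟩
  calc dist x y ≤ dist x p + dist y p := dist_triangle_right x y p
    _ < δ / 2 + δ / 2 := add_lt_add hx hy
    _ = δ := add_halves δ

theorem exists_itineraryComplexity_mul_pow_lt
    (hΦ : ∀ x y, s x = s y → dist (Φ x) (Φ y) ≤ dist x y)
    (hKc : IsCompact K) (hK : Set.MapsTo Φ K K)
    (hM : ∀ p ∈ K, ∃ r > 0, itineraryComplexity Φ s n (Metric.ball p r) ≤ M)
    {b : ℝ} (hb0 : 0 ≤ b) (hMb : M * b ^ n < 1) {ε : ℝ} (hε : 0 < ε) :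
    ∃ m, itineraryComplexity Φ s m K * b ^ m < ε := by
  obtain ⟨N, hN⟩ := exists_itineraryComplexity_mul_le hΦ hKc hK hM
  have hlim : Tendsto (fun k => (N : ℝ) * (M * b ^ n) ^ k) atTop (𝓝 0) := by
    simpa using (tendsto_pow_atTop_nhds_zero_of_lt_one (by positivity) hMb).const_mul (N : ℝ)
  obtain ⟨k, hk⟩ := (hlim.eventually_lt_const hε).exists
  refine ⟨k * n, lt_of_le_of_lt ?_ hk⟩
  calc (itineraryComplexity Φ s (k * n) K : ℝ) * b ^ (k * n)
      ≤ (N * M ^ k : ℕ) * b ^ (k * n) := by gcongr; exact hN k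
    _ = N * (M * b ^ n) ^ k := by push_cast; rw [mul_pow, ← pow_mul' b, mul_assoc]

end ItineraryComplexity

section SignPatterns

lemma exists_forall_lt_iff_lt_of_antitone {P : ℕ → Prop} (hP : Antitone P) (n : ℕ) :
    ∃ j ≤ n, ∀ k < n, (P k ↔ k < j) := by
  induction n with
  | zero => exact ⟨0, le_rfl, by simp⟩
  | succ n ih =>
    by_cases hn : P n
    · exact ⟨n + 1, le_rfl, fun k hk => iff_of_true (hP (Nat.le_of_lt_succ hk) hn) hk⟩
    · obtain ⟨j, hj, h⟩ := ih
      refine ⟨j, hj.trans n.le_succ, fun k hk => ?_⟩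
      obtain hk | rfl := Nat.lt_succ_iff_lt_or_eq.1 hk
      · exact h k hk
      · exact iff_of_false hn hj.not_gt

-- As `k` grows, `a ^ k * α` moves monotonically from `α` towards `0`, so the sign of
-- `a ^ k * α - β` changes at most once, in a direction determined by the sign of `α`.
lemma exists_code_nonneg_pow_mul_sub {𝕜 : Type*} [CommRing 𝕜] [LinearOrder 𝕜]
    [IsStrictOrderedRing 𝕜] {a : 𝕜} (ha0 : 0 ≤ a) (ha1 : a ≤ 1) (n : ℕ) :
    ∃ code : 𝕜 → 𝕜 → Bool × Fin (n + 1), ∀ α β α' β', code α β = code α' β' →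
      ∀ k < n, (0 ≤ a ^ k * α - β ↔ 0 ≤ a ^ k * α' - β') := by
  have hdecode : ∀ α β : 𝕜, ∃ j ≤ n, ∀ k < n,
      (0 ≤ a ^ k * α - β ↔ if 0 ≤ α then k < j else ¬ k < j) := by
    intro α β
    by_cases hα : 0 ≤ α
    · simp only [hα, if_true]
      refine exists_forall_lt_iff_lt_of_antitone (fun i j hij (h : _ ≤ _) => h.trans ?_) n
      have := pow_le_pow_of_le_one ha0 ha1 hij
      gcongr
    · have hanti : Antitone fun k => ¬ 0 ≤ a ^ k * α - β := by
        refine fun i j hij h hi => h (hi.trans ?_)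
        have := mul_le_mul_of_nonpos_right (pow_le_pow_of_le_one ha0 ha1 hij) (not_le.1 hα).le
        gcongr
      simp only [hα, if_false]
      obtain ⟨j, hj, h⟩ := exists_forall_lt_iff_lt_of_antitone hanti n
      exact ⟨j, hj, fun k hk => not_iff_comm.1 (h k hk) |>.symm⟩
  choose j hj hiff using hdecode
  refine ⟨fun α β => (decide (0 ≤ α), ⟨j α β, Nat.lt_succ_of_le (hj α β)⟩),
    fun α β α' β' h k hk => ?_⟩
  simp only [Prod.mk.injEq, decide_eq_decide, Fin.mk.injEq] at h
  rw [hiff α β k hk, hiff α' β' k hk, h.2]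
  simp only [h.1]

lemma mul_add_nonneg_iff_of_abs_lt {𝕜 : Type*} [CommRing 𝕜] [LinearOrder 𝕜]
    [IsStrictOrderedRing 𝕜] {g u d : 𝕜} (h : |d| < |u|) :
    0 ≤ g * (u + d) ↔ 0 ≤ g * u := by
  rcases lt_or_ge u 0 with hu | hu
  · have hud : u + d < 0 := by linarith [le_abs_self d, abs_of_neg hu]
    rw [← neg_mul_neg, mul_nonneg_iff_of_pos_right (neg_pos.2 hud), ← neg_mul_neg g u,
      mul_nonneg_iff_of_pos_right (neg_pos.2 hu)]
  · have hu' : 0 < u := abs_of_nonneg hu ▸ (abs_nonneg d).trans_lt h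
    have hud : 0 < u + d := by linarith [neg_abs_le d, abs_of_nonneg hu]
    rw [mul_nonneg_iff_of_pos_right hud, mul_nonneg_iff_of_pos_right hu']

lemma exists_pos_forall_le_norm_of_finite {F : Type*} [NormedAddCommGroup F] {s : Set F}
    (hs : s.Finite) : ∃ r > 0, ∀ u ∈ s, u ≠ 0 → r ≤ ‖u‖ := by
  have hmem : (s \ {0})ᶜ ∈ 𝓝 (0 : F) := hs.sdiff.isClosed.isOpen_compl.mem_nhds (by simp)
  obtain ⟨r, hr, hball⟩ := Metric.mem_nhds_iff.1 hmem
  refine ⟨r, hr, fun u hu hu0 => not_lt.1 fun hlt => ?_⟩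
  exact hball (mem_ball_zero_iff.2 hlt) ⟨hu, hu0⟩

lemma exists_pow_mul_pow_lt_one (d : ℕ) {b : ℝ} (hb0 : 0 ≤ b) (hb1 : b < 1) :
    ∃ n : ℕ, (2 * (n + 1) : ℝ) ^ d * b ^ n < 1 := by
  have hlim : Tendsto (fun n : ℕ => (4 : ℝ) ^ d * ((n : ℝ) ^ d * b ^ n)) atTop (𝓝 0) := by
    simpa using (tendsto_pow_const_mul_const_pow_of_abs_lt_one d
      (abs_lt.2 ⟨by linarith, hb1⟩)).const_mul ((4 : ℝ) ^ d)
  obtain ⟨n, hlt, hn⟩ := ((hlim.eventually_lt_const one_pos).and (eventually_ge_atTop 1)).exists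
  refine ⟨n, lt_of_le_of_lt ?_ hlt⟩
  have hn' : (1 : ℝ) ≤ n := by exact_mod_cast hn
  rw [← mul_assoc, ← mul_pow]
  refine mul_le_mul_of_nonneg_right (pow_le_pow_left₀ (by positivity) ?_ d) (by positivity)
  linarith

end SignPatterns

lemma volume_closedBall_inter_slab_le {ι : Type*} [Fintype ι] (R h c : ℝ) (i : ι) :
    volume {x ∈ Metric.closedBall (0 : ι → ℝ) R | |x i - c| ≤ h} ≤
      ENNReal.ofReal (2 * h) * ENNReal.ofReal (2 * R) ^ (Fintype.card ι - 1) := by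
  classical
  have hsub : {x ∈ Metric.closedBall (0 : ι → ℝ) R | |x i - c| ≤ h} ⊆ Set.univ.pi
      (Function.update (fun _ => Metric.closedBall (0 : ℝ) R) i (Metric.closedBall c h)) := by
    rintro x ⟨hxR, hxi⟩ j -
    obtain rfl | hj := eq_or_ne j i
    · simpa only [Function.update_self, Metric.mem_closedBall, Real.dist_eq] using hxi
    · rw [Function.update_of_ne hj]
      exact (dist_le_pi_dist x 0 j).trans hxR
  refine (measure_mono hsub).trans_eq ?_
  rw [volume_pi_pi]
  simp only [Function.apply_update fun _ : ι => (volume : Set ℝ → ℝ≥0∞)]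
  rw [Finset.prod_update_of_mem (Finset.mem_univ i), Finset.prod_const,
    Finset.card_univ_sdiff, Finset.card_singleton, Real.volume_closedBall, Real.volume_closedBall]

/-- A threshold system: a contraction of `X → ℝ` by the factor `a` towards a point `target s` that
depends only on the symbol `s`, i.e. on which side of its threshold each edge `e : E` finds the
coordinate `src e`. The sign of `gain e` tells an activation from an inhibition. -/
structure ThresholdSystem (X E : Type*) where
  src : E → X
  gain : E → ℝ
  target : (E → Bool) → X → ℝ
  a : ℝ
  a_nonneg : 0 ≤ a
  a_lt_one : a < 1

namespace ThresholdSystem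

variable {X E : Type*} (S : ThresholdSystem X E)

/-- The symbol of the state `x` for the thresholds `T`. -/
noncomputable def symbol (T : E → ℝ) (x : X → ℝ) : E → Bool :=
  fun e => decide (0 ≤ S.gain e * (x (S.src e) - T e))

/-- The dynamics of the system for the thresholds `T`. -/
noncomputable def map (T : E → ℝ) (x : X → ℝ) : X → ℝ :=
  S.a • x + (1 - S.a) • S.target (S.symbol T x)

/-- The dynamics on pairs `(T, x)` that leaves the thresholds `T` fixed. -/
noncomputable def skew (q : (E → ℝ) × (X → ℝ)) : (E → ℝ) × (X → ℝ) :=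
  (q.1, S.map q.1 q.2)

/-- The coding of pairs `(T, x)` by symbols. -/
noncomputable def coding (q : (E → ℝ) × (X → ℝ)) : E → Bool := S.symbol q.1 q.2

/-- The part of the `k`-th iterate that does not come from the initial state; it takes finitely
many values, determined by the itinerary. -/
noncomputable def drift (k : ℕ) (q : (E → ℝ) × (X → ℝ)) : X → ℝ :=
  (S.skew^[k] q).2 - S.a ^ k • q.2

lemma skew_iterate (k : ℕ) (q : (E → ℝ) × (X → ℝ)) :
    S.skew^[k] q = (q.1, (S.map q.1)^[k] q.2) := by
  induction k with
  | zero => rfl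
  | succ k ih => rw [Function.iterate_succ_apply', ih, skew, Function.iterate_succ_apply']

lemma drift_succ (k : ℕ) (q : (E → ℝ) × (X → ℝ)) :
    S.drift (k + 1) q = S.a • S.drift k q + (1 - S.a) • S.target (S.coding (S.skew^[k] q)) := by
  simp only [drift, Function.iterate_succ_apply', skew, map, coding, smul_sub, pow_succ', mul_smul]
  abel

lemma drift_eq_of_itinerary_eq {k : ℕ} {q q' : (E → ℝ) × (X → ℝ)}
    (h : itinerary S.skew S.coding k q = itinerary S.skew S.coding k q') :
    S.drift k q = S.drift k q' := by
  induction k with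
  | zero => simp [drift]
  | succ k ih =>
    obtain ⟨hk, hs⟩ := itinerary_succ_eq_iff.1 h
    rw [drift_succ, drift_succ, ih hk, hs]

lemma finite_range_drift [Finite E] (k : ℕ) : (Set.range (S.drift k)).Finite := by
  induction k with
  | zero => exact (Set.finite_singleton 0).subset (by rintro _ ⟨q, rfl⟩; simp [drift])
  | succ k ih =>
    refine (ih.image2 (fun c s => S.a • c + (1 - S.a) • S.target s) Set.finite_univ).subset ?_
    rintro _ ⟨q, rfl⟩
    exact ⟨_, ⟨q, rfl⟩, _, Set.mem_univ (S.coding (S.skew^[k] q)), (S.drift_succ k q).symm⟩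

section Dynamics

variable [Fintype X]

lemma dist_map_eq {T T' : E → ℝ} {x x' : X → ℝ} (h : S.symbol T x = S.symbol T' x') :
    dist (S.map T x) (S.map T' x') = S.a * dist x x' := by
  rw [map, map, h, dist_add_right, dist_smul₀, Real.norm_of_nonneg S.a_nonneg]

lemma dist_iterate_snd_eq {n : ℕ} {q q' : (E → ℝ) × (X → ℝ)}
    (h : itinerary S.skew S.coding n q = itinerary S.skew S.coding n q') :
    dist (S.skew^[n] q).2 (S.skew^[n] q').2 = S.a ^ n * dist q.2 q'.2 := by
  have hd := S.drift_eq_of_itinerary_eq h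
  rw [drift, drift, sub_eq_sub_iff_sub_eq_sub, ← smul_sub] at hd
  rw [dist_eq_norm, hd, norm_smul, norm_pow, Real.norm_of_nonneg S.a_nonneg, ← dist_eq_norm]

lemma symbol_eq_of_dist_lt {T : E → ℝ} {z w : X → ℝ} {δ : ℝ}
    (hgap : ∀ e, δ ≤ |z (S.src e) - T e|) (h : dist z w < δ) : S.symbol T z = S.symbol T w := by
  funext e
  have hlt : |w (S.src e) - z (S.src e)| < |z (S.src e) - T e| := by
    rw [← Real.dist_eq, dist_comm]
    exact ((dist_le_pi_dist z w _).trans_lt h).trans_le (hgap e)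
  rw [symbol, symbol, decide_eq_decide, ← mul_add_nonneg_iff_of_abs_lt hlt, sub_add_sub_cancel']

lemma contractsAlongOrbit {T : E → ℝ} {x : X → ℝ} {δ : ℝ}
    (hgap : ∀ k e, δ ≤ |(S.map T)^[k] x (S.src e) - T e|) :
    ContractsAlongOrbit (S.map T) S.a δ x :=
  fun k _ hw => (S.dist_map_eq (S.symbol_eq_of_dist_lt (hgap k) hw)).le

lemma mapsTo_map_closedBall {R : ℝ} (hR : ∀ s, ‖S.target s‖ ≤ R) (T : E → ℝ) :
    Set.MapsTo (S.map T) (Metric.closedBall 0 R) (Metric.closedBall 0 R) := fun x hx =>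
  convex_closedBall 0 R hx (mem_closedBall_zero_iff.2 (hR (S.symbol T x))) S.a_nonneg
    (sub_nonneg.2 S.a_lt_one.le) (add_sub_cancel _ _)

/-- The states reached in `n` steps from the ball of radius `R` keep a uniform distance from the
thresholds `T`. When the ball is invariant, so do all later states. -/
def UniformGap (n : ℕ) (R : ℝ) (T : E → ℝ) : Prop :=
  ∃ δ > 0, ∀ x ∈ Metric.closedBall (0 : X → ℝ) R, ∀ e, δ ≤ |(S.map T)^[n] x (S.src e) - T e|

theorem isAsympPeriodic_of_uniformGap {R : ℝ} (hR : ∀ s, ‖S.target s‖ ≤ R) {T : E → ℝ} {n : ℕ}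
    (hT : S.UniformGap n R T) {x : X → ℝ} (hx : x ∈ Metric.closedBall 0 R) :
    IsAsympPeriodic (S.map T) x := by
  obtain ⟨δ, hδ, hgap⟩ := hT
  have hmem : ∀ k, (S.map T)^[k] x ∈ Metric.closedBall 0 R := fun k =>
    (S.mapsTo_map_closedBall hR T).iterate k hx
  have hcontr : ContractsAlongOrbit (S.map T) S.a δ ((S.map T)^[n] x) := by
    refine S.contractsAlongOrbit fun k e => ?_
    rw [← Function.iterate_add_apply, add_comm, Function.iterate_add_apply]
    exact hgap _ (hmem k) e
  refine (hcontr.isAsympPeriodic S.a_nonneg S.a_lt_one hδ ?_).of_iterate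
  refine (Metric.isBounded_closedBall (x := 0) (r := R)).subset
    (Set.range_subset_iff.2 fun k => ?_)
  rw [← Function.iterate_add_apply]
  exact hmem (k + n)

end Dynamics

/-- For `q = (T, x)`, the value of `z (src e) - T e`, where `z` is the state after `k` steps, is
the sum of this offset and of `a ^ k * (q.2 - p.2) (src e) - (q.1 - p.1) e`. For fixed `p` the
offset takes only finitely many values. -/
noncomputable def offset (p : (E → ℝ) × (X → ℝ)) (k : ℕ) (e : E) (q : (E → ℝ) × (X → ℝ)) : ℝ :=
  S.drift k q (S.src e) + S.a ^ k * p.2 (S.src e) - p.1 e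

lemma coding_skew_iterate (p q : (E → ℝ) × (X → ℝ)) (k : ℕ) (e : E) :
    S.coding (S.skew^[k] q) e = decide (0 ≤ S.gain e * (S.offset p k e q +
      (S.a ^ k * (q.2 - p.2) (S.src e) - (q.1 - p.1) e))) := by
  have hfst : (S.skew^[k] q).1 = q.1 := by rw [skew_iterate]
  rw [coding, symbol, hfst]
  congr! 3
  simp only [offset, drift, Pi.sub_apply, Pi.smul_apply, smul_eq_mul]
  ring

lemma exists_pos_forall_le_abs_offset [Finite E] (p : (E → ℝ) × (X → ℝ)) (n : ℕ) :
    ∃ r > 0, ∀ k < n, ∀ e q, S.offset p k e q ≠ 0 → r ≤ |S.offset p k e q| := by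
  have hfin : (⋃ k : Fin n, ⋃ e, Set.range (S.offset p k e)).Finite := by
    refine Set.finite_iUnion fun k => Set.finite_iUnion fun e => ?_
    refine ((S.finite_range_drift k).image
      fun c => c (S.src e) + S.a ^ (k : ℕ) * p.2 (S.src e) - p.1 e).subset ?_
    rintro _ ⟨q, rfl⟩
    exact ⟨_, ⟨q, rfl⟩, rfl⟩
  obtain ⟨r, hr, h⟩ := exists_pos_forall_le_norm_of_finite hfin
  exact ⟨r, hr, fun k hk e q =>
    h _ (Set.mem_iUnion₂.2 ⟨⟨k, hk⟩, e, Set.mem_range_self q⟩)⟩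

section LocalComplexity

variable [Fintype X] [Fintype E]

lemma abs_perturbation_lt {p q : (E → ℝ) × (X → ℝ)} {r : ℝ}
    (hq : q ∈ Metric.ball p (r / 2)) (k : ℕ) (e : E) :
    |S.a ^ k * (q.2 - p.2) (S.src e) - (q.1 - p.1) e| < r := by
  rw [mem_ball_iff_norm] at hq
  have hstate : |S.a ^ k * (q.2 - p.2) (S.src e)| ≤ ‖q - p‖ := by
    rw [abs_mul, abs_of_nonneg (pow_nonneg S.a_nonneg k)]
    exact (mul_le_of_le_one_left (abs_nonneg _) (pow_le_one₀ S.a_nonneg S.a_lt_one.le)).trans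
      ((norm_le_pi_norm (q - p).2 _).trans (norm_snd_le _))
  have hthreshold : |(q.1 - p.1) e| ≤ ‖q - p‖ := (norm_le_pi_norm (q - p).1 e).trans (norm_fst_le _)
  calc _ ≤ |S.a ^ k * (q.2 - p.2) (S.src e)| + |(q.1 - p.1) e| := abs_sub _ _
    _ < r := by linarith

-- Near `p`, the symbol at step `k` is decided by the offset when that is nonzero; otherwise it is
-- the sign of `a ^ k * α - β` for some `α`, `β` that do not depend on `k`.
theorem exists_itineraryComplexity_ball_le (p : (E → ℝ) × (X → ℝ)) (n : ℕ) :
    ∃ r > 0, itineraryComplexity S.skew S.coding n (Metric.ball p r) ≤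
      (2 * (n + 1)) ^ Fintype.card E := by
  obtain ⟨code, hcode⟩ := exists_code_nonneg_pow_mul_sub S.a_nonneg S.a_lt_one.le n
  obtain ⟨r, hr, hgap⟩ := S.exists_pos_forall_le_abs_offset p n
  refine ⟨r / 2, half_pos hr, ?_⟩
  have hcard : Nat.card (E → Bool × Fin (n + 1)) = (2 * (n + 1)) ^ Fintype.card E := by
    simp only [Nat.card_fun, Nat.card_eq_fintype_card, Fintype.card_prod, Fintype.card_bool,
      Fintype.card_fin]
  rw [← hcard]
  refine itineraryComplexity_le_card (fun q e => code (S.gain e * (q.2 - p.2) (S.src e))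
    (S.gain e * (q.1 - p.1) e)) fun q hq q' hq' hqq' => ?_
  suffices ∀ k ≤ n, itinerary S.skew S.coding k q = itinerary S.skew S.coding k q' from
    this n le_rfl
  intro k hk
  induction k with
  | zero => exact Subsingleton.elim _ _
  | succ k ih =>
    have hitin := ih (Nat.le_of_succ_le hk)
    refine itinerary_succ_eq_iff.2 ⟨hitin, funext fun e => ?_⟩
    have hoffset : S.offset p k e q = S.offset p k e q' := by
      rw [offset, offset, S.drift_eq_of_itinerary_eq hitin]
    rw [S.coding_skew_iterate p, S.coding_skew_iterate p, decide_eq_decide]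
    by_cases h0 : S.offset p k e q' = 0
    · rw [hoffset, h0, zero_add, zero_add, mul_sub, mul_sub, mul_left_comm, mul_left_comm _ (_ ^ _)]
      exact hcode _ _ _ _ (congrFun hqq' e) k hk
    · have hr' := hgap k hk e q' h0
      rw [hoffset, mul_add_nonneg_iff_of_abs_lt ((S.abs_perturbation_lt hq k e).trans_le hr'),
        mul_add_nonneg_iff_of_abs_lt ((S.abs_perturbation_lt hq' k e).trans_le hr')]

lemma dist_skew_le {q q' : (E → ℝ) × (X → ℝ)} (h : S.coding q = S.coding q') :
    dist (S.skew q) (S.skew q') ≤ dist q q' := by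
  refine max_le_max le_rfl ?_
  exact (S.dist_map_eq h).trans_le (mul_le_of_le_one_left dist_nonneg S.a_lt_one.le)

theorem exists_itineraryComplexity_closedBall_mul_pow_lt {R : ℝ} (hR : ∀ s, ‖S.target s‖ ≤ R)
    {b : ℝ} (hb0 : 0 ≤ b) (hb1 : b < 1) {ε : ℝ} (hε : 0 < ε) :
    ∃ n, itineraryComplexity S.skew S.coding n (Metric.closedBall 0 R) * b ^ n < ε := by
  obtain ⟨n, hn⟩ := exists_pow_mul_pow_lt_one (Fintype.card E) hb0 hb1
  have hmaps : Set.MapsTo S.skew (Metric.closedBall 0 R) (Metric.closedBall 0 R) := by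
    rw [← Prod.mk_zero_zero, ← closedBall_prod_same]
    exact fun q hq => ⟨hq.1, S.mapsTo_map_closedBall hR q.1 hq.2⟩
  exact exists_itineraryComplexity_mul_pow_lt (fun _ _ => S.dist_skew_le)
    (isCompact_closedBall 0 R) hmaps (fun p _ => S.exists_itineraryComplexity_ball_le p n) hb0
    (by exact_mod_cast hn) hε

end LocalComplexity

section AlmostEverywhere

variable [Fintype X] [Fintype E]

lemma exists_abs_sub_le_of_not_uniformGap {n : ℕ} {R : ℝ} {T : E → ℝ}
    (hT : T ∈ Metric.closedBall 0 R) (hgap : ¬ S.UniformGap n R T) {δ : ℝ} (hδ : 0 < δ)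
    {Q : Set ((E → ℝ) × (X → ℝ))} (hQ : Q ⊆ Metric.closedBall 0 R)
    (hsurj : Set.SurjOn (itinerary S.skew S.coding n) Q
      (itinerary S.skew S.coding n '' Metric.closedBall 0 R)) :
    ∃ q ∈ Q, ∃ e, |T e - (S.skew^[n] q).2 (S.src e)| ≤ S.a ^ n * (2 * R) + δ := by
  simp only [UniformGap] at hgap
  push Not at hgap
  obtain ⟨x, hx, e, he⟩ := hgap δ hδ
  have hTx : (T, x) ∈ Metric.closedBall 0 R := by
    rw [← Prod.mk_zero_zero, ← closedBall_prod_same]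
    exact ⟨hT, hx⟩
  obtain ⟨q, hq, hitin⟩ := hsurj (Set.mem_image_of_mem _ hTx)
  have hdist : dist x q.2 ≤ 2 * R := by
    have := (norm_snd_le q).trans (mem_closedBall_zero_iff.1 (hQ hq))
    linarith [dist_le_norm_add_norm x q.2, mem_closedBall_zero_iff.1 hx]
  refine ⟨q, hq, e, ?_⟩
  calc |T e - (S.skew^[n] q).2 (S.src e)|
      ≤ |T e - (S.map T)^[n] x (S.src e)| +
          |(S.map T)^[n] x (S.src e) - (S.skew^[n] q).2 (S.src e)| := abs_sub_le _ _ _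
    _ ≤ δ + S.a ^ n * dist x q.2 := by
        refine add_le_add (abs_sub_comm (T e) _ ▸ he.le) ?_
        have hn := S.dist_iterate_snd_eq hitin.symm
        rw [S.skew_iterate n (T, x)] at hn
        exact (dist_le_pi_dist _ _ (S.src e)).trans_eq hn
    _ ≤ S.a ^ n * (2 * R) + δ := by
        rw [add_comm]
        gcongr
        exact pow_nonneg S.a_nonneg n

lemma volume_not_uniformGap_le (n : ℕ) (R : ℝ) {δ : ℝ} (hδ : 0 < δ) :
    volume {T ∈ Metric.closedBall 0 R | ¬ S.UniformGap n R T} ≤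
      itineraryComplexity S.skew S.coding n (Metric.closedBall 0 R) * Fintype.card E *
        (ENNReal.ofReal (2 * (S.a ^ n * (2 * R) + δ)) *
          ENNReal.ofReal (2 * R) ^ (Fintype.card E - 1)) := by
  set h := S.a ^ n * (2 * R) + δ
  obtain ⟨Q, hQ, hbij⟩ := Set.exists_subset_bijOn (Metric.closedBall 0 R)
    (itinerary S.skew S.coding n)
  have hQfin : Q.Finite := hbij.finite_iff_finite.2 (Set.toFinite _)
  have hcard : hQfin.toFinset.card =
      itineraryComplexity S.skew S.coding n (Metric.closedBall 0 R) := by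
    rw [← Set.ncard_eq_toFinset_card Q hQfin, hbij.ncard_eq, itineraryComplexity]
  have hcover : {T ∈ Metric.closedBall 0 R | ¬ S.UniformGap n R T} ⊆
      ⋃ i ∈ hQfin.toFinset ×ˢ Finset.univ, {T ∈ Metric.closedBall (0 : E → ℝ) R |
        |T i.2 - (S.skew^[n] i.1).2 (S.src i.2)| ≤ h} := by
    rintro T ⟨hT, hgap⟩
    obtain ⟨q, hq, e, he⟩ := S.exists_abs_sub_le_of_not_uniformGap hT hgap hδ hQ hbij.surjOn
    exact Set.mem_iUnion₂.2 ⟨(q, e), by simpa using hq, hT, he⟩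
  refine ((measure_mono hcover).trans (measure_biUnion_finset_le _ _)).trans ?_
  refine (Finset.sum_le_card_nsmul _ _ _ fun i _ =>
    volume_closedBall_inter_slab_le R h _ i.2).trans_eq ?_
  rw [Finset.card_product, hcard, Finset.card_univ, nsmul_eq_mul, Nat.cast_mul]

theorem ae_exists_uniformGap {R : ℝ} (hR : ∀ s, ‖S.target s‖ ≤ R) :
    ∀ᵐ T : E → ℝ, T ∈ Metric.closedBall 0 R → ∃ n, S.UniformGap n R T := by
  obtain ⟨b, hab, hb1⟩ := exists_between S.a_lt_one
  have hb0 : 0 < b := S.a_nonneg.trans_lt hab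
  have hR0 : 0 ≤ R := (norm_nonneg _).trans (hR fun _ => true)
  set C := Fintype.card E * (2 * (2 * R + 1) * (2 * R) ^ (Fintype.card E - 1)) with hC
  have hC0 : 0 ≤ C := by positivity
  have hbound : ∀ n, volume {T ∈ Metric.closedBall 0 R | ¬ S.UniformGap n R T} ≤ ENNReal.ofReal
      (itineraryComplexity S.skew S.coding n (Metric.closedBall 0 R) * b ^ n * C) := by
    intro n
    refine (S.volume_not_uniformGap_le n R (pow_pos hb0 n)).trans ?_
    rw [← ENNReal.ofReal_pow (by positivity), ← ENNReal.ofReal_mul' (by positivity),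
      ← ENNReal.ofReal_natCast, ← ENNReal.ofReal_natCast, ← ENNReal.ofReal_mul (by positivity),
      ← ENNReal.ofReal_mul (by positivity)]
    refine ENNReal.ofReal_le_ofReal ?_
    have hpow : S.a ^ n ≤ b ^ n := pow_le_pow_left₀ S.a_nonneg hab.le n
    calc _ ≤ itineraryComplexity S.skew S.coding n (Metric.closedBall 0 R) * Fintype.card E *
          (2 * (b ^ n * (2 * R) + b ^ n) * (2 * R) ^ (Fintype.card E - 1)) := by gcongr
      _ = _ := by rw [hC]; ring
  rw [ae_iff]
  simp only [Classical.not_imp]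
  refine le_antisymm (ENNReal.le_of_forall_pos_le_add fun ε hε _ => ?_) zero_le
  obtain ⟨n, hn⟩ := S.exists_itineraryComplexity_closedBall_mul_pow_lt hR hb0.le hb1
    (div_pos hε (by positivity : 0 < C + 1))
  rw [zero_add, ← ENNReal.ofReal_coe_nnreal]
  refine le_trans (measure_mono ?_) ((hbound n).trans (ENNReal.ofReal_le_ofReal ?_))
  · exact fun T hT => ⟨hT.1, not_exists.1 hT.2 n⟩
  calc _ ≤ (ε : ℝ) / (C + 1) * (C + 1) :=
        mul_le_mul hn.le (le_add_of_nonneg_right zero_le_one) hC0 (by positivity)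
    _ = ε := div_mul_cancel₀ _ (by positivity)

theorem ae_forall_isAsympPeriodic :
    ∀ᵐ T : E → ℝ, ∀ x : X → ℝ, IsAsympPeriodic (S.map T) x := by
  obtain ⟨R₀, hR₀⟩ := (Set.finite_range fun s => ‖S.target s‖).bddAbove
  have hgap : ∀ᵐ T : E → ℝ, ∀ m : ℕ, T ∈ Metric.closedBall 0 (max R₀ m) →
      ∃ n, S.UniformGap n (max R₀ m) T :=
    ae_all_iff.2 fun m => S.ae_exists_uniformGap fun s =>
      (hR₀ (Set.mem_range_self s)).trans (le_max_left _ _)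
  filter_upwards [hgap] with T hT x
  obtain ⟨m, hm⟩ := exists_nat_ge (max ‖T‖ ‖x‖)
  have hle := hm.trans (le_max_right R₀ m)
  obtain ⟨n, hn⟩ := hT m (mem_closedBall_zero_iff.2 ((le_max_left _ _).trans hle))
  exact S.isAsympPeriodic_of_uniformGap
    (fun s => (hR₀ (Set.mem_range_self s)).trans (le_max_left _ _)) hn
    (mem_closedBall_zero_iff.2 ((le_max_right _ _).trans hle))

end AlmostEverywhere

open scoped Pointwise in
lemma drift_mem_smul {C : Set (X → ℝ)} (hC : Convex ℝ C) (htarget : ∀ s, S.target s ∈ C) (k : ℕ)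
    (q : (E → ℝ) × (X → ℝ)) : S.drift k q ∈ (1 - S.a ^ k) • C := by
  induction k with
  | zero => exact ⟨_, htarget (S.coding q), by simp [drift]⟩
  | succ k ih =>
    have hk : 0 ≤ S.a * (1 - S.a ^ k) :=
      mul_nonneg S.a_nonneg (sub_nonneg.2 (pow_le_one₀ S.a_nonneg S.a_lt_one.le))
    have hsplit : 1 - S.a ^ (k + 1) = S.a * (1 - S.a ^ k) + (1 - S.a) := by ring
    rw [drift_succ, hsplit, hC.add_smul hk (sub_nonneg.2 S.a_lt_one.le), mul_smul]
    exact Set.add_mem_add (Set.smul_mem_smul_set ih) (Set.smul_mem_smul_set (htarget _))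

lemma mem_of_mem_periodicPts {C : Set (X → ℝ)} (hC : Convex ℝ C) (htarget : ∀ s, S.target s ∈ C)
    {T : E → ℝ} {y : X → ℝ} (hy : y ∈ Function.periodicPts (S.map T)) : y ∈ C := by
  obtain ⟨p, hp, hper⟩ := hy
  have hne : 1 - S.a ^ p ≠ 0 := (sub_pos.2 (pow_lt_one₀ S.a_nonneg S.a_lt_one hp.ne')).ne'
  have hdrift : S.drift p (T, y) = (1 - S.a ^ p) • y := by
    rw [drift, skew_iterate, hper.eq, sub_smul, one_smul]
  rw [← Set.smul_mem_smul_set_iff₀ hne, ← hdrift]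
  exact S.drift_mem_smul hC htarget p (T, y)

end ThresholdSystem

section RegulatoryNetwork

lemma card_filter_attach_eq_inDeg {V : Type*} [DecidableEq V] (A : Finset (V × V)) (v : V) :
    (A.attach.filter fun e => e.val.2 = v).card = inDeg A v :=
  (congrArg Finset.card (Finset.filter_attach (fun e : V × V => e.2 = v) A)).trans
    ((Finset.card_map _).trans Finset.card_attach)

/-- The threshold system of a regulatory network: its coordinates are the vertices, its edges the
arrows of `A`, and the target of `v` is the proportion of active arrows into `v`. -/
noncomputable def regSystem {V : Type*} [DecidableEq V] (A : Finset (V × V))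
    (σ : {e // e ∈ A} → Bool) (a : ℝ) (ha0 : 0 ≤ a) (ha1 : a < 1) :
    ThresholdSystem V {e // e ∈ A} where
  src e := e.val.1
  gain e := signVal (σ e)
  target s v := (inDeg A v : ℝ)⁻¹ *
    ∑ e ∈ A.attach.filter (fun e => e.val.2 = v), if s e then 1 else 0
  a := a
  a_nonneg := ha0
  a_lt_one := ha1

variable {A : Finset (V × V)} {σ : {e // e ∈ A} → Bool} {a : ℝ} {ha0 : 0 ≤ a} {ha1 : a < 1}

lemma regSystem_target_mem_cubeV (s : {e // e ∈ A} → Bool) :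
    (regSystem A σ a ha0 ha1).target s ∈ cubeV V := by
  intro v _
  have hsum : ∑ e ∈ A.attach.filter (fun e => e.val.2 = v), (if s e then (1 : ℝ) else 0) ≤
      inDeg A v := by
    rw [Finset.sum_boole, ← card_filter_attach_eq_inDeg]
    exact_mod_cast Finset.card_filter_le _ _
  refine ⟨mul_nonneg (by positivity) (Finset.sum_nonneg fun e _ => by positivity), ?_⟩
  exact (mul_le_mul_of_nonneg_left hsum (by positivity)).trans inv_mul_le_one

lemma regSystem_map (T : {e // e ∈ A} → ℝ) :
    (regSystem A σ a ha0 ha1).map T = regMap A σ T a := by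
  funext x v
  simp [ThresholdSystem.map, ThresholdSystem.symbol, regSystem, regMap, heaviside]

lemma exists_asympPeriod_of_isAsympPeriodic (ha0 : 0 ≤ a) (ha1 : a < 1) {T : {e // e ∈ A} → ℝ}
    {x : V → ℝ} (h : IsAsympPeriodic (regMap A σ T a) x) : ∃ τ, asympPeriod A σ T a x τ := by
  obtain ⟨y, hy, hlim⟩ := h
  have hcube : y ∈ cubeV V := by
    rw [← regSystem_map (ha0 := ha0) (ha1 := ha1)] at hy
    exact ThresholdSystem.mem_of_mem_periodicPts _ (convex_pi fun _ _ => convex_Icc 0 1)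
      regSystem_target_mem_cubeV hy
  exact ⟨Function.minimalPeriod (regMap A σ T a) y,
    Function.minimalPeriod_pos_of_mem_periodicPts hy, y, hcube,
    Function.isPeriodicPt_minimalPeriod _ _, fun t ht0 ht =>
      Function.not_isPeriodicPt_of_pos_of_lt_minimalPeriod ht0.ne' ht, hlim⟩

lemma volume_cube_inter_eq_one {P : ({e // e ∈ A} → ℝ) → (V → ℝ) → Prop}
    (h : ∀ᵐ T, ∀ x, P T x) : volume {p : ({e // e ∈ A} → ℝ) × (V → ℝ) |
      p.1 ∈ cubeA A ∧ p.2 ∈ cubeV V ∧ P p.1 p.2} = 1 := by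
  have hae : {p : ({e // e ∈ A} → ℝ) × (V → ℝ) | p.1 ∈ cubeA A ∧ p.2 ∈ cubeV V ∧ P p.1 p.2}
      =ᵐ[volume] cubeA A ×ˢ cubeV V := by
    filter_upwards [Measure.quasiMeasurePreserving_fst.ae h] with p hp
    exact propext ⟨fun hmem => ⟨hmem.1, hmem.2.1⟩, fun hmem => ⟨hmem.1, hmem.2, hp p.2⟩⟩
  rw [measure_congr hae, Measure.volume_eq_prod, Measure.prod_prod, cubeA, cubeV, volume_pi_pi,
    volume_pi_pi]
  simp

end RegulatoryNetwork

theorem asympPeriod_finite_full_measure_general (V : Type*) [Fintype V] [DecidableEq V]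
    (A : Finset (V × V)) (σ : {e // e ∈ A} → Bool) (a : ℝ) (ha0 : 0 ≤ a) (ha1 : a < 1) :
    ∀ᵐ T : {e // e ∈ A} → ℝ, ∀ x : V → ℝ, ∃ τ : ℕ, asympPeriod A σ T a x τ := by
  filter_upwards [(regSystem A σ a ha0 ha1).ae_forall_isAsympPeriodic] with T hT x
  exact exists_asympPeriod_of_isAsympPeriodic ha0 ha1 (regSystem_map T ▸ hT x)

/-- For every finite vertex set `V`, digraph `G=(V,A)`, sign vector
`σ ∈ {-1,1}^A` and `a ∈ [0,1)`, the set of pairs `(T,x) ∈ [0,1]^A × [0,1]^V` whose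
asymptotic period `P(F_{G,σ,T,a},x)` is finite has full Lebesgue measure in
`[0,1]^A × [0,1]^V` (which has total measure `1`). -/
theorem asympPeriod_finite_full_measure (V : Type*) [Fintype V] [DecidableEq V]
    (A : Finset (V × V)) (σ : {e // e ∈ A} → Bool) (a : ℝ) (ha0 : 0 ≤ a) (ha1 : a < 1) :
    volume {p : ({e // e ∈ A} → ℝ) × (V → ℝ) |
        p.1 ∈ cubeA A ∧ p.2 ∈ cubeV V ∧ ∃ τ : ℕ, asympPeriod A σ p.1 a p.2 τ} = 1 :=
  volume_cube_inter_eq_one (asympPeriod_finite_full_measure_general V A σ a ha0 ha1)
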